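/- arXiv:1504.06807 — 10 statements merged into one kernel-verified Lean document; each statement's English description precedes it below -/
import Mathlib

section
/- For every nonempty alphabet A, every finite coloring φ : A⁺ → C, and every infinite word x over A, there exists a suffix x' of x which admits a φ-sequentially monochromatic factorization. -/
/-- The first `n` letters of the infinite word `x`, as a finite word. -/
def wordTake {A : Type*} (x : ℕ → A) (n : ℕ) : List A := (List.range n).map x

/-- The finite word `u` is a prefix of the infinite word `x`. -/
def IsPrefixOf {A : Type*} (u : List A) (x : ℕ → A) : Prop := u = wordTake x u.length

/-- The finite word `u` is a (nonempty) factor of the infinite word `x`. -/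
def IsFactorOf {A : Type*} (u : List A) (x : ℕ → A) : Prop :=
  u ≠ [] ∧ ∃ i : ℕ, u = (List.range u.length).map fun k => x (i + k)

/-- `V 0, V 1, V 2, …` is a factorization of the infinite word `x` into nonempty blocks,
i.e. each finite concatenation `V 0 ++ ⋯ ++ V (n-1)` is a prefix of `x`. -/
def IsFactorization {A : Type*} (x : ℕ → A) (V : ℕ → List A) : Prop :=
  (∀ i, V i ≠ []) ∧ ∀ n : ℕ, IsPrefixOf (((List.range n).map V).flatten) x

/-- The concatenation `V i ++ V (i+1) ++ ⋯ ++ V (i+j)` of consecutive blocks. -/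
def blockConcat {A : Type*} (V : ℕ → List A) (i j : ℕ) : List A :=
  ((List.range (j + 1)).map fun t => V (i + t)).flatten

/-- The concatenation `V (n (σ 0)) ++ V (n (σ 1)) ++ ⋯ ++ V (n (σ (k-1)))`. -/
def permConcat {A : Type*} (V : ℕ → List A) {k : ℕ} (n : Fin k → ℕ)
    (σ : Equiv.Perm (Fin k)) : List A :=
  (List.ofFn fun t => V (n (σ t))).flatten

/-- The factorization `V` is `φ`-monochromatic. -/
def IsMonochromatic {A C : Type*} (φ : List A → C) (V : ℕ → List A) : Prop :=
  ∃ c : C, ∀ i, φ (V i) = c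

/-- The factorization `V` is `φ`-sequentially monochromatic. -/
def IsSeqMonochromatic {A C : Type*} (φ : List A → C) (V : ℕ → List A) : Prop :=
  ∃ c : C, ∀ i j : ℕ, φ (blockConcat V i j) = c

/-- The factorization `V` is `φ`-ultra monochromatic. -/
def IsUltraMonochromatic {A C : Type*} (φ : List A → C) (V : ℕ → List A) : Prop :=
  ∃ c : C, ∀ k : ℕ, 1 ≤ k → ∀ n : Fin k → ℕ, StrictMono n →
    ∀ σ : Equiv.Perm (Fin k), φ (permConcat V n σ) = c

/-- The word `x_a x_{a+1} ⋯ x_{b-1}`. -/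
def segWord {A : Type*} (x : ℕ → A) (a b : ℕ) : List A :=
  (List.range (b - a)).map fun k => x (a + k)

theorem segWord_append {A : Type*} (x : ℕ → A) {a b c : ℕ} (hab : a ≤ b) (hbc : b ≤ c) :
    segWord x a b ++ segWord x b c = segWord x a c := by
  obtain ⟨p, rfl⟩ := Nat.exists_eq_add_of_le hab
  obtain ⟨q, rfl⟩ := Nat.exists_eq_add_of_le hbc
  have h1 : a + p - a = p := by omega
  have h2 : a + p + q - (a + p) = q := by omega
  have h3 : a + p + q - a = p + q := by omega
  simp only [segWord, h1, h2, h3, List.range_add, List.map_append, List.map_map]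
  congr 1
  apply List.map_congr_left
  intro k _
  simp [Nat.add_assoc]

theorem segWord_flatten {A : Type*} (x : ℕ → A) (g : ℕ → ℕ) (hg : StrictMono g) (i j : ℕ) :
    ((List.range j).map fun t => segWord x (g (i + t)) (g (i + t + 1))).flatten
      = segWord x (g i) (g (i + j)) := by
  induction j with
  | zero => simp [segWord]
  | succ j ih =>
    rw [List.range_succ, List.map_append, List.flatten_append, ih]
    simp only [List.map_cons, List.map_nil, List.flatten_cons, List.flatten_nil, List.append_nil]
    exact segWord_append x (hg.monotone (by omega)) (hg.monotone (by omega))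

theorem ultrafilter_color {C : Type*} [Finite C] (U : Ultrafilter ℕ) (d : ℕ → C) :
    ∃ c, ∀ᶠ a in (U : Filter ℕ), d a = c := by
  obtain ⟨c, hc⟩ := (U.map d).eq_pure_of_finite
  refine ⟨c, ?_⟩
  have : ({c} : Set C) ∈ U.map d := by rw [hc]; exact Set.mem_singleton c
  exact this

/-- Infinite Ramsey theorem for pairs. -/
theorem ramsey_pairs {C : Type*} [Finite C] (f : ℕ → ℕ → C) :
    ∃ c, ∃ g : ℕ → ℕ, StrictMono g ∧ ∀ m n, m < n → f (g m) (g n) = c := by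
  let U : Ultrafilter ℕ := Filter.hyperfilter ℕ
  choose d hd using fun a => ultrafilter_color U (f a)
  obtain ⟨c, hc⟩ := ultrafilter_color U d
  have hlt : ∀ a, ∀ᶠ b in (U : Filter ℕ), a < b := fun a =>
    (Filter.eventually_gt_atTop a).filter_mono Nat.hyperfilter_le_atTop
  obtain ⟨g, _, hg⟩ := exists_seq_of_forall_finset_exists (fun a => d a = c)
    (fun a b => a < b ∧ f a b = c) (by
      intro s hs
      have h : ∀ᶠ b in (U : Filter ℕ), ∀ a ∈ s, a < b ∧ f a b = c := by
        rw [Filter.eventually_all_finset]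
        intro a ha
        filter_upwards [hlt a, hd a] with b h1 h2
        exact ⟨h1, h2.trans (hs a ha)⟩
      exact (hc.and h).exists)
  exact ⟨c, g, fun m n h => (hg m n h).1, fun m n h => (hg m n h).2⟩

/-- For every nonempty alphabet, every finite coloring of nonempty finite
words, and every infinite word `x`, some suffix of `x` admits a `φ`-sequentially
monochromatic factorization. -/
theorem suffix_admits_seq_monochromatic_factorization
    {A C : Type*} [Nonempty A] [Fintype C] [Nonempty C]
    (φ : List A → C) (x : ℕ → A) :
    ∃ n : ℕ, ∃ V : ℕ → List A,
      IsFactorization (fun m => x (n + m)) V ∧ IsSeqMonochromatic φ V := by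
  obtain ⟨c, g, hg, hc⟩ := ramsey_pairs (fun a b => φ (segWord x a b))
  refine ⟨g 0, fun i => segWord x (g i) (g (i + 1)), ⟨?_, ?_⟩, c, ?_⟩
  · intro i h
    have h1 := congrArg List.length h
    have h2 := hg (Nat.lt_succ_self i)
    simp [segWord] at h1
    simp only [Nat.succ_eq_add_one] at h2
    omega
  · intro n
    have h := segWord_flatten x g hg 0 n
    simp only [Nat.zero_add] at h
    rw [h]
    simp [IsPrefixOf, wordTake, segWord]
  · intro i j
    have h := segWord_flatten x g hg i (j + 1)
    unfold blockConcat
    rw [h]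
    exact hc _ _ (by omega)
end

section
/- Suppose that for every finite coloring φ : {0,1}⁺ → C and every infinite binary word x there exists a suffix of x which admits a φ-sequentially monochromatic factorization. Then the infinite Ramsey theorem for pairs holds: for every finite coloring φ of the 2-element subsets of ℕ by a finite nonempty set C, there exist c ∈ C and an infinite set 𝒩 ⊆ ℕ such that every 2-element subset of 𝒩 has color c. -/
/-- The binary word with ones exactly at the powers of two. -/
noncomputable def powWord : ℕ → Bool := fun n => by
  classical exact decide (∃ k, n = 2 ^ k)

lemma powWord_iff (n : ℕ) : powWord n = true ↔ ∃ k, n = 2 ^ k := by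
  simp [powWord]

lemma pow_diff {i j k : ℕ} (e : 2 ^ j = 2 ^ i + 2 ^ k) : i = k := by
  have key : ∀ {i j k : ℕ}, 2 ^ j = 2 ^ i + 2 ^ k → i < k → False := by
    intro i j k e hik
    have h1 : 2 ^ k < 2 ^ j := by
                                  have : 0 < 2 ^ i := by positivity
                                  omega
    have h2 : k < j := (Nat.pow_lt_pow_iff_right (by norm_num)).1 h1
    have h3 : 2 ^ (k + 1) ≤ 2 ^ j := Nat.pow_le_pow_right (by norm_num) h2
    have h4 : 2 ^ i < 2 ^ k := Nat.pow_lt_pow_right (by norm_num) hik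
    rw [pow_succ] at h3
    omega
  rcases lt_trichotomy i k with h | h | h
  · exact (key e h).elim
  · exact h
  · exact (key (by rw [e, add_comm]) h).elim

/-- A long enough factor of `powWord` starting at `a` occurs only at `a`. -/
lemma powWord_unique {a b L : ℕ} (hL : 2 ^ (a + 1) < L)
    (hab : ∀ k < L, powWord (a + k) = powWord (b + k)) : a = b := by
  have h0 : a < 2 ^ a := Nat.lt_two_pow_self
  have hs : 2 ^ (a + 1) = 2 ^ a + 2 ^ a := by rw [pow_succ]; omega
  have h1 := hab (2 ^ a - a) (by omega)
  have h2 := hab (2 ^ (a + 1) - a) (by omega)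
  rw [show a + (2 ^ a - a) = 2 ^ a by omega, (powWord_iff _).2 ⟨_, rfl⟩] at h1
  rw [show a + (2 ^ (a + 1) - a) = 2 ^ (a + 1) by omega, (powWord_iff _).2 ⟨_, rfl⟩] at h2
  obtain ⟨i, hi⟩ := (powWord_iff _).1 h1.symm
  obtain ⟨j, hj⟩ := (powWord_iff _).1 h2.symm
  have : i = a := pow_diff (j := j) (by omega)
  subst this
  omega

/-- Length of the first `i` blocks. -/
def cutLen {A : Type*} (V : ℕ → List A) (i : ℕ) : ℕ := (((List.range i).map V).flatten).length

lemma flatten_split {A : Type*} (V : ℕ → List A) (i j : ℕ) :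
    ((List.range (i + (j + 1))).map V).flatten =
      ((List.range i).map V).flatten ++ blockConcat V i j := by
  rw [List.range_add, List.map_append, List.flatten_append, blockConcat, List.map_map]
  rfl

lemma cutLen_block {A : Type*} (V : ℕ → List A) (i j : ℕ) :
    cutLen V (i + (j + 1)) = cutLen V i + (blockConcat V i j).length := by
  rw [cutLen, flatten_split, List.length_append, cutLen]

lemma cutLen_strictMono {A : Type*} {V : ℕ → List A} (hV : ∀ i, V i ≠ []) :
    StrictMono (cutLen V) := by
  apply strictMono_nat_of_lt_succ
  intro i
  have := cutLen_block V i 0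
  have h2 : 0 < (blockConcat V i 0).length := by
    simpa [blockConcat, List.length_pos_iff] using hV i
  simp only [zero_add] at this
  omega

lemma block_eq {A : Type*} {x : ℕ → A} {V : ℕ → List A} (hV : IsFactorization x V) (i j : ℕ) :
    blockConcat V i j =
      (List.range (blockConcat V i j).length).map fun k => x (cutLen V i + k) := by
  have h1 := hV.2 (i + (j + 1))
  have h2 := hV.2 i
  unfold IsPrefixOf wordTake at h1 h2
  rw [flatten_split, List.length_append, List.range_add, List.map_append, ← h2] at h1
  have h3 := List.append_cancel_left h1
  rw [List.map_map] at h3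
  exact h3

open Classical in
/-- The coloring of words induced by a coloring of pairs. -/
noncomputable def wordColor {C : Type} [Nonempty C] (φ : Finset ℕ → C) (u : List Bool) : C :=
  if hu : ∃ a : ℕ, u = (List.range u.length).map fun k => powWord (a + k) then
    φ {hu.choose, hu.choose + u.length}
  else Classical.arbitrary C

lemma wordColor_eq {C : Type} [Nonempty C] (φ : Finset ℕ → C) {u : List Bool} {a : ℕ}
    (hu : u = (List.range u.length).map fun k => powWord (a + k))
    (hL : 2 ^ (a + 1) < u.length) : wordColor φ u = φ {a, a + u.length} := by
  have hex : ∃ a : ℕ, u = (List.range u.length).map fun k => powWord (a + k) := ⟨a, hu⟩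
  have : a = hex.choose := by
    apply powWord_unique hL
    intro k hk
    have h3 := hu.symm.trans hex.choose_spec
    exact (List.map_inj_left.1 h3) k (List.mem_range.2 hk)
  rw [wordColor, dif_pos hex, ← this]

/-- If every infinite binary word has a suffix admitting a sequentially
monochromatic factorization for every finite coloring, then the infinite Ramsey theorem
for pairs holds. -/
theorem seq_monochromatic_implies_ramsey_pairs
    (h : ∀ (C : Type) [Fintype C] [Nonempty C] (φ : List Bool → C) (x : ℕ → Bool),
      ∃ n : ℕ, ∃ V : ℕ → List Bool,
        IsFactorization (fun m => x (n + m)) V ∧ IsSeqMonochromatic φ V) :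
    ∀ (C : Type) [Fintype C] [Nonempty C] (φ : Finset ℕ → C),
      ∃ c : C, ∃ N : Set ℕ, N.Infinite ∧
        ∀ s : Finset ℕ, s.card = 2 → ↑s ⊆ N → φ s = c := by
  intro C _ _ φ
  obtain ⟨n, V, hV, c, hc⟩ := h C (wordColor φ) powWord
  have hmono := cutLen_strictMono hV.1
  let p : ℕ → ℕ := fun i => n + cutLen V i
  have hp : StrictMono p := fun a b hab => Nat.add_lt_add_left (hmono hab) n
  -- colors of far apart cut points
  have far : ∀ i d, 2 ^ (p i + 1) < p (i + d) - p i → φ {p i, p (i + d)} = c := by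
    intro i d hd
    obtain _ | j := d
    · simp at hd
    have hb := block_eq hV i j
    have hl := cutLen_block V i j
    have e : p (i + (j + 1)) = p i + (blockConcat V i j).length := by
      simp only [p]; omega
    rw [e, ← wordColor_eq φ (a := p i), hc]
    · simp only [p, add_assoc]; exact hb
    · omega
  -- a sparse subsequence
  let m : ℕ → ℕ := fun k => Nat.rec 0 (fun _ r => r + (2 ^ (p r + 1) + 1)) k
  have hms : ∀ k, m (k + 1) = m k + (2 ^ (p (m k) + 1) + 1) := fun k => rfl
  have hm : StrictMono m := strictMono_nat_of_lt_succ fun k => by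
    rw [hms]
    exact Nat.lt_add_of_pos_right (Nat.succ_pos _)
  have main : ∀ k l, k < l → φ {p (m k), p (m l)} = c := by
    intro k l hkl
    have h1 : m (k + 1) ≤ m l := hm.monotone hkl
    have h2 := hms k
    obtain ⟨d, hd⟩ := Nat.exists_eq_add_of_le (hm hkl).le
    rw [hd]
    apply far
    have h3 := hp.add_le_nat d (m k)
    rw [add_comm d (m k)] at h3
    omega
  refine ⟨c, Set.range (p ∘ m), Set.infinite_range_of_injective (hp.comp hm).injective, ?_⟩
  intro s hs hsub
  obtain ⟨a, b, hab, rfl⟩ := Finset.card_eq_two.1 hs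
  obtain ⟨k, rfl⟩ := hsub (show a ∈ _ by simp)
  obtain ⟨l, rfl⟩ := hsub (show b ∈ _ by simp)
  rcases lt_trichotomy k l with h | h | h
  · exact main k l h
  · exact (hab (by rw [h])).elim
  · rw [Finset.pair_comm]; exact main l k h
end

section
/- (Schützenberger) For every nonempty alphabet A, every finite coloring φ : A⁺ → C, and every infinite word x over A, there exists a suffix of x which admits a φ-monochromatic factorization. -/
theorem exists_consecutive_mono {C : Type*} (col : ℕ → ℕ → C) (S : Finset C) :
    ∀ f : ℕ → ℕ, StrictMono f → (∀ m n, m < n → col (f m) (f n) ∈ S) →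
      ∃ c, ∃ g : ℕ → ℕ, StrictMono g ∧ ∀ n, col (g n) (g (n + 1)) = c := by
  classical
  induction S using Finset.induction_on with
  | empty =>
    intro f _ h
    exact absurd (h 0 1 Nat.zero_lt_one) (Finset.notMem_empty _)
  | insert a S _ ih =>
    intro f hf h
    obtain ⟨g, hg | hg⟩ :=
      exists_increasing_or_nonincreasing_subseq' (fun m n => col m n = a) f
    · exact ⟨a, f ∘ g, hf.comp g.strictMono, hg⟩
    · refine ih (f ∘ g) (hf.comp g.strictMono) fun m n hmn => ?_
      exact Finset.mem_of_mem_insert_of_ne (h _ _ (g.strictMono hmn)) (hg m n hmn)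

theorem flatten_blocks {A : Type*} (x : ℕ → A) (g : ℕ → ℕ) (hg : StrictMono g) (n : ℕ) :
    ((List.range n).map fun i =>
      (List.range (g (i + 1) - g i)).map fun k => x (g i + k)).flatten
      = (List.range (g n - g 0)).map fun k => x (g 0 + k) := by
  induction n with
  | zero => simp
  | succ n ih =>
    have h0 : g 0 ≤ g n := hg.monotone (Nat.zero_le n)
    have h1 : g n < g (n + 1) := hg (Nat.lt_succ_self n)
    have e : g (n + 1) - g 0 = (g n - g 0) + (g (n + 1) - g n) := by omega
    rw [List.range_succ, List.map_append, List.flatten_append, ih, e, List.range_add]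
    simp only [List.map_append, List.map_map, List.map_cons, List.map_nil, List.flatten_cons,
      List.flatten_nil, List.append_nil]
    congr 1
    apply List.map_congr_left
    intro k _
    simp only [Function.comp]
    congr 1
    omega

/-- Schützenberger: For every nonempty alphabet, every finite coloring, and
every infinite word `x`, some suffix of `x` admits a `φ`-monochromatic factorization. -/
theorem suffix_admits_monochromatic_factorization
    {A C : Type*} [Nonempty A] [Fintype C] [Nonempty C]
    (φ : List A → C) (x : ℕ → A) :
    ∃ n : ℕ, ∃ V : ℕ → List A,
      IsFactorization (fun m => x (n + m)) V ∧ IsMonochromatic φ V := by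
  obtain ⟨c, g, hg, hc⟩ := exists_consecutive_mono
    (fun m n => φ ((List.range (n - m)).map fun k => x (m + k))) Finset.univ id strictMono_id
    (fun _ _ _ => Finset.mem_univ _)
  refine ⟨g 0, fun i => (List.range (g (i + 1) - g i)).map fun k => x (g i + k), ⟨?_, ?_⟩, c, hc⟩
  · intro i
    have h1 : g i < g (i + 1) := hg (Nat.lt_succ_self i)
    simp only [ne_eq, List.map_eq_nil_iff, List.range_eq_nil]
    omega
  · intro n
    unfold IsPrefixOf wordTake
    rw [flatten_blocks x g hg n]
    simp
end

section
/- Let r ≥ 1 and let x be an r-power free Sturmian word over {0,1}. Then for every infinite sequence V₀, V₁, V₂, ⋯ of nonempty finite binary words there exist k ≥ 1, indices 0 ≤ n₁ < n₂ < ⋯ < n_k, and a permutation σ of {1,2,…,k} such that the concatenation V_{n_σ(1)} V_{n_σ(2)} ⋯ V_{n_σ(k)} is not a factor of x. -/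
/-- The infinite word `x` is ultimately periodic. -/
def IsUltimatelyPeriodic {A : Type*} (x : ℕ → A) : Prop :=
  ∃ n p : ℕ, 0 < p ∧ ∀ k : ℕ, x (n + k + p) = x (n + k)

/-- The infinite binary word `x` is balanced. -/
def IsBalanced (x : ℕ → Bool) : Prop :=
  ∀ u v : List Bool, IsFactorOf u x → IsFactorOf v x → u.length = v.length →
    ∀ a : Bool, |(u.count a : ℤ) - (v.count a : ℤ)| ≤ 1

/-- The infinite binary word `x` is Sturmian: aperiodic and balanced. -/
def IsSturmian (x : ℕ → Bool) : Prop := ¬ IsUltimatelyPeriodic x ∧ IsBalanced x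

/-- The infinite word `x` is `r`-power free: for no factor `u` of `x` is `u^r` a factor. -/
def IsPowerFree {A : Type*} (r : ℕ) (x : ℕ → A) : Prop :=
  ∀ u : List A, IsFactorOf u x → ¬ IsFactorOf ((List.replicate r u).flatten) x

/-- the window of length `n` at position `q` -/
def swin (x : ℕ → Bool) (q n : ℕ) : List Bool := (List.range n).map fun k => x (q + k)

lemma swin_length (x : ℕ → Bool) (q n : ℕ) : (swin x q n).length = n := by simp [swin]

lemma swin_factor (x : ℕ → Bool) (q n : ℕ) (hn : 0 < n) : IsFactorOf (swin x q n) x := by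
  constructor
  · intro h
    have := congrArg List.length h
    simp [swin] at this
    omega
  · exact ⟨q, by rw [swin_length]; rfl⟩

lemma swin_add (x : ℕ → Bool) (q m n : ℕ) :
    swin x q (m + n) = swin x q m ++ swin x (q + m) n := by
  simp only [swin, List.range_add, List.map_append, List.map_map]
  congr 1
  apply List.map_congr_left
  intro k _
  simp [Nat.add_assoc]

lemma swin_congr (x : ℕ → Bool) (p q n : ℕ) (h : ∀ k < n, x (p + k) = x (q + k)) :
    swin x p n = swin x q n := by
  apply List.map_congr_left
  intro k hk
  exact h k (List.mem_range.1 hk)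

lemma swin_inj (x : ℕ → Bool) (p q n : ℕ) (h : swin x p n = swin x q n) :
    ∀ k < n, x (p + k) = x (q + k) := by
  intro k hk
  have := congrArg (fun l => l[k]?) h
  simpa [swin, hk] using this

lemma swin_one (x : ℕ → Bool) (q : ℕ) : swin x q 1 = [x q] := by simp [swin]

/-- a long enough window with period `p` contains an `r`-th power -/
lemma no_period (r : ℕ) (hr : 1 ≤ r) (x : ℕ → Bool) (hpf : IsPowerFree r x)
    (q p m : ℕ) (hp : 0 < p) (hm : r * p ≤ m)
    (h : ∀ i, i + p < m → x (q + i + p) = x (q + i)) : False := by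
  have key : ∀ s, s * p ≤ m → swin x q (s * p) = (List.replicate s (swin x q p)).flatten ∧
      (1 ≤ s → swin x (q + (s - 1) * p) p = swin x q p) := by
    intro s
    induction s with
    | zero => intro _; simp [swin]
    | succ s ih =>
      intro hs
      have hs' : s * p + p ≤ m := by rw [Nat.succ_mul] at hs; exact hs
      obtain ⟨h1, h2⟩ := ih (by omega)
      have h3 : swin x (q + s * p) p = swin x q p := by
        rcases Nat.eq_zero_or_pos s with h0 | h0
        · subst h0; simp
        · rw [← h2 h0]
          obtain ⟨t, rfl⟩ : ∃ t, s = t + 1 := ⟨s - 1, by omega⟩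
          apply swin_congr
          intro k hk
          have e : (t + 1) * p = t * p + p := Nat.succ_mul t p
          have := h (t * p + k) (by omega)
          simp only [Nat.add_sub_cancel]
          rw [e]
          convert this using 2 <;> omega
      refine ⟨?_, fun _ => by simpa using h3⟩
      rw [Nat.succ_mul, swin_add, h1, h3, List.replicate_succ']
      simp
  apply hpf (swin x q p) (swin_factor x q p hp)
  rw [← (key r hm).1]
  exact swin_factor x q _ (Nat.mul_pos hr hp)

/-- two left special factors of a balanced word: one is a prefix of the other -/
lemma left_special (x : ℕ → Bool) (hb : IsBalanced x) (a a' b b' n : ℕ)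
    (ha : x a ≠ x a') (hb' : x b ≠ x b')
    (hA : ∀ k < n, x (a + 1 + k) = x (a' + 1 + k))
    (hB : ∀ k < n, x (b + 1 + k) = x (b' + 1 + k)) :
    ∀ k < n, x (a + 1 + k) = x (b + 1 + k) := by
  -- core computation
  have core : ∀ s t j : ℕ, x s ≠ x t → x (s + 1 + j) = x s → x (t + 1 + j) = x t →
      (∀ k < j, x (s + 1 + k) = x (t + 1 + k)) → False := by
    intro s t j hst h1 h2 h3
    have e : ∀ s, swin x s (1 + j + 1) = x s :: swin x (s + 1) j ++ [x (s + 1 + j)] := by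
      intro s
      rw [swin_add, swin_add, swin_one, swin_one, ← Nat.add_assoc]
      rfl
    have := hb _ _ (swin_factor x s (1 + j + 1) (by omega)) (swin_factor x t (1 + j + 1) (by omega))
      (by simp [swin_length]) (x s)
    rw [e, e, swin_congr x (s + 1) (t + 1) j h3, h1, h2] at this
    simp [List.count_append, List.count_cons, hst.symm] at this
    rw [abs_le] at this
    omega
  intro k
  induction k using Nat.strong_induction_on with
  | _ k ih =>
    intro hk
    by_contra hne
    have ih' : ∀ j < k, x (a + 1 + j) = x (b + 1 + j) := fun j hj => ih j hj (by omega)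
    have hAk := hA k hk
    have hBk := hB k hk
    have hA' : ∀ j < k, x (a + 1 + j) = x (a' + 1 + j) := fun j hj => hA j (by omega)
    have hB' : ∀ j < k, x (b + 1 + j) = x (b' + 1 + j) := fun j hj => hB j (by omega)
    obtain ⟨s, hs1, hs2, hs3⟩ : ∃ s, x s = x (a + 1 + k) ∧ x (s + 1 + k) = x (a + 1 + k) ∧
        ∀ j < k, x (s + 1 + j) = x (a + 1 + j) := by
      by_cases h : x a = x (a + 1 + k)
      · exact ⟨a, h, rfl, fun _ _ => rfl⟩
      · refine ⟨a', ?_, hAk.symm, fun j hj => (hA' j hj).symm⟩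
        revert h ha
        cases x a <;> cases x a' <;> cases x (a + 1 + k) <;> simp
    obtain ⟨t, ht1, ht2, ht3⟩ : ∃ s, x s = x (b + 1 + k) ∧ x (s + 1 + k) = x (b + 1 + k) ∧
        ∀ j < k, x (s + 1 + j) = x (b + 1 + j) := by
      by_cases h : x b = x (b + 1 + k)
      · exact ⟨b, h, rfl, fun _ _ => rfl⟩
      · refine ⟨b', ?_, hBk.symm, fun j hj => (hB' j hj).symm⟩
        revert h hb'
        cases x b <;> cases x b' <;> cases x (b + 1 + k) <;> simp
    refine core s t k ?_ (by rw [hs1, hs2]) (by rw [ht1, ht2]) ?_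
    · rw [hs1, ht1]; exact hne
    · intro j hj
      rw [hs3 j hj, ht3 j hj, ih' j hj]

/-- two branchings at different depths force a short period -/
lemma two_branch (r : ℕ) (hr : 1 ≤ r) (x : ℕ → Bool) (hb : IsBalanced x)
    (hpf : IsPowerFree r x) (L m : ℕ) (hm : r * L ≤ m) (W : ℕ → Bool)
    (q1 q2 q3 q4 d e : ℕ) (hd0 : 1 ≤ d) (hde : d < e) (heL : e ≤ L)
    (h1 : L ≤ q1) (h2 : L ≤ q2) (h3 : L ≤ q3) (h4 : L ≤ q4)
    (w1 : ∀ k < m, x (q1 + k) = W k) (w2 : ∀ k < m, x (q2 + k) = W k)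
    (w3 : ∀ k < m, x (q3 + k) = W k) (w4 : ∀ k < m, x (q4 + k) = W k)
    (hd : x (q1 - d) ≠ x (q2 - d)) (hd' : ∀ t, 1 ≤ t → t < d → x (q1 - t) = x (q2 - t))
    (he : x (q3 - e) ≠ x (q4 - e)) (he' : ∀ t, 1 ≤ t → t < e → x (q3 - t) = x (q4 - t)) :
    False := by
  have gen : ∀ q q' d n, 1 ≤ d → d ≤ L → L ≤ q → L ≤ q' → n ≤ d - 1 + m →
      (∀ k < m, x (q + k) = W k) → (∀ k < m, x (q' + k) = W k) →
      (∀ t, 1 ≤ t → t < d → x (q - t) = x (q' - t)) →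
      ∀ k < n, x (q - d + 1 + k) = x (q' - d + 1 + k) := by
    intro q q' d n a1 a2 a3 a4 a5 a6 a7 a8 k hk
    by_cases hkd : k + 1 < d
    · have := a8 (d - 1 - k) (by omega) (by omega)
      convert this using 2 <;> omega
    · have e1 := a6 (k + 1 - d) (by omega)
      have e2 := a7 (k + 1 - d) (by omega)
      have := e1.trans e2.symm
      convert this using 2 <;> omega
  have main := left_special x hb (q1 - d) (q2 - d) (q3 - e) (q4 - e) (d - 1 + m) hd he
    (gen q1 q2 d _ hd0 (by omega) h1 h2 le_rfl w1 w2 hd')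
    (gen q3 q4 e _ (by omega) heL h3 h4 (by omega) w3 w4 he')
  refine no_period r hr x hpf q1 (e - d) m (by omega)
    (le_trans (Nat.mul_le_mul_left r (by omega)) hm) ?_
  intro i hi
  have e1 := main (d - 1 + (i + (e - d))) (by omega)
  have e2 := w3 i (by omega)
  have e3 := w1 i (by omega)
  rw [e3, ← e2]
  convert e1 using 2 <;> omega

/-- three different left extensions are impossible -/
lemma three_ext (r : ℕ) (hr : 1 ≤ r) (x : ℕ → Bool) (hb : IsBalanced x)
    (hpf : IsPowerFree r x) (L m : ℕ) (hm : r * L ≤ m) (W : ℕ → Bool)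
    (q1 q2 q3 : ℕ) (h1 : L ≤ q1) (h2 : L ≤ q2) (h3 : L ≤ q3)
    (w1 : ∀ k < m, x (q1 + k) = W k) (w2 : ∀ k < m, x (q2 + k) = W k)
    (w3 : ∀ k < m, x (q3 + k) = W k)
    (n12 : ∃ t, 1 ≤ t ∧ t ≤ L ∧ x (q1 - t) ≠ x (q2 - t))
    (n13 : ∃ t, 1 ≤ t ∧ t ≤ L ∧ x (q1 - t) ≠ x (q3 - t))
    (n23 : ∃ t, 1 ≤ t ∧ t ≤ L ∧ x (q2 - t) ≠ x (q3 - t)) : False := by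
  have least : ∀ q q' : ℕ, (∃ t, 1 ≤ t ∧ t ≤ L ∧ x (q - t) ≠ x (q' - t)) →
      ∃ d, 1 ≤ d ∧ d ≤ L ∧ x (q - d) ≠ x (q' - d) ∧
        ∀ t, 1 ≤ t → t < d → x (q - t) = x (q' - t) := by
    intro q q' h
    classical
    obtain ⟨a, b, c⟩ := Nat.find_spec h
    refine ⟨Nat.find h, a, b, c, ?_⟩
    intro t ht1 ht2
    by_contra hne
    exact Nat.find_min h ht2 ⟨ht1, by omega, hne⟩
  obtain ⟨d, d1, d2, d3, d4⟩ := least _ _ n12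
  obtain ⟨e, e1, e2, e3, e4⟩ := least _ _ n13
  obtain ⟨f, f1, f2, f3, f4⟩ := least _ _ n23
  rcases lt_trichotomy d e with h | h | h
  · exact two_branch r hr x hb hpf L m hm W q1 q2 q1 q3 d e d1 h e2 h1 h2 h1 h3 w1 w2 w1 w3
      d3 d4 e3 e4
  · rcases lt_trichotomy d f with h' | h' | h'
    · exact two_branch r hr x hb hpf L m hm W q1 q2 q2 q3 d f d1 h' f2 h1 h2 h2 h3 w1 w2 w2 w3
        d3 d4 f3 f4
    · subst h; subst h'
      revert d3 e3 f3
      cases x (q1 - d) <;> cases x (q2 - d) <;> cases x (q3 - d) <;> simp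
    · exact two_branch r hr x hb hpf L m hm W q2 q3 q1 q2 f d f1 h' d2 h2 h3 h1 h2 w2 w3 w1 w2
        f3 f4 d3 d4
  · exact two_branch r hr x hb hpf L m hm W q1 q3 q1 q2 e d e1 h d2 h1 h3 h1 h2 w1 w3 w1 w2
      e3 e4 d3 d4

lemma factor_split (x : ℕ → Bool) (u w : List Bool) (h : IsFactorOf (u ++ w) x) :
    ∃ q, swin x q u.length = u ∧ swin x (q + u.length) w.length = w := by
  obtain ⟨_, q, hq⟩ := h
  have hq' : u ++ w = swin x q (u.length + w.length) := by
    rw [← List.length_append]; exact hq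
  rw [swin_add] at hq'
  have := List.append_inj hq' (by simp [swin_length])
  exact ⟨q, this.1.symm, this.2.symm⟩

lemma three_words (r : ℕ) (hr : 1 ≤ r) (x : ℕ → Bool) (hb : IsBalanced x)
    (hpf : IsPowerFree r x) (u1 u2 u3 w : List Bool) (l2 : u2.length = u1.length)
    (l3 : u3.length = u1.length) (hm : r * u1.length ≤ w.length)
    (n12 : u1 ≠ u2) (n13 : u1 ≠ u3) (n23 : u2 ≠ u3)
    (f1 : IsFactorOf (u1 ++ w) x) (f2 : IsFactorOf (u2 ++ w) x)
    (f3 : IsFactorOf (u3 ++ w) x) : False := by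
  obtain ⟨q1, a1, b1⟩ := factor_split x _ _ f1
  obtain ⟨q2, a2, b2⟩ := factor_split x _ _ f2
  obtain ⟨q3, a3, b3⟩ := factor_split x _ _ f3
  rw [l2] at a2 b2
  rw [l3] at a3 b3
  set L := u1.length
  have ex : ∀ p q, swin x p L ≠ swin x q L →
      ∃ t, 1 ≤ t ∧ t ≤ L ∧ x (p + L - t) ≠ x (q + L - t) := by
    intro p q h
    by_contra hcon
    push Not at hcon
    apply h
    apply swin_congr
    intro k hk
    have := hcon (L - k) (by omega) (by omega)
    convert this using 2 <;> omega
  refine three_ext r hr x hb hpf L w.length hm (fun k => x (q1 + L + k)) (q1 + L) (q2 + L) (q3 + L)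
    (by omega) (by omega) (by omega) (fun _ _ => rfl) ?_ ?_ ?_ ?_ ?_
  · exact swin_inj x _ _ _ (b2.trans b1.symm)
  · exact swin_inj x _ _ _ (b3.trans b1.symm)
  · apply ex; rw [a1, a2]; exact n12
  · apply ex; rw [a1, a3]; exact n13
  · apply ex; rw [a2, a3]; exact n23

lemma no_comm (r : ℕ) (hr : 1 ≤ r) (x : ℕ → Bool) (hpf : IsPowerFree r x)
    (v c : List Bool) (hv : v ≠ []) (hc : r * v.length ≤ c.length)
    (hf : IsFactorOf (v ++ c) x) (h : v ++ c = c ++ v) : False := by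
  obtain ⟨_, q, hq⟩ := hf
  have hq' : v ++ c = swin x q (v.length + c.length) := by
    rw [← List.length_append]; exact hq
  have h1 := hq'
  rw [swin_add] at h1
  have h2 := hq'
  rw [h, Nat.add_comm, swin_add] at h2
  have e1 := (List.append_inj h1 (by simp [swin_length])).2
  have e2 := (List.append_inj h2 (by simp [swin_length])).1
  have := swin_inj x _ _ _ (e1.symm.trans e2)
  refine no_period r hr x hpf q v.length c.length (List.length_pos_iff.2 hv) hc ?_
  intro i hi
  have := this i (by omega)
  rw [← this]; congr 1; omega

lemma perm_of_list (x : ℕ → Bool) (V : ℕ → List Bool)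
    (H : ∀ k : ℕ, 1 ≤ k → ∀ n : Fin k → ℕ, StrictMono n → ∀ σ : Equiv.Perm (Fin k),
      IsFactorOf (permConcat V n σ) x) (l : List ℕ) (hl : l.Nodup) (hne : l ≠ []) :
    IsFactorOf (l.map V).flatten x := by
  have hcard : l.toFinset.card = l.length := List.toFinset_card_of_nodup hl
  let n : Fin l.length ↪o ℕ := l.toFinset.orderEmbOfFin hcard
  have hex : ∀ t : Fin l.length, ∃ s, n s = l.get t := by
    intro t
    have : l.get t ∈ Set.range n := by
      rw [Finset.range_orderEmbOfFin]; simp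
    exact this
  choose f hf using hex
  have finj : Function.Injective f := by
    intro s t hst
    have : l.get s = l.get t := by rw [← hf, ← hf, hst]
    exact List.nodup_iff_injective_get.1 hl this
  let σ : Equiv.Perm (Fin l.length) := Equiv.ofBijective f (Finite.injective_iff_bijective.1 finj)
  have := H l.length (List.length_pos_iff.2 hne) n n.strictMono σ
  have e : permConcat V n σ = (l.map V).flatten := by
    unfold permConcat
    congr 1
    have : (fun t => V (n (σ t))) = V ∘ l.get := by
      funext t
      show V (n (f t)) = V (l.get t)
      rw [hf]
    rw [this, ← List.map_ofFn, List.ofFn_get]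
  rwa [e] at this

/-- If `x` is an `r`-power free Sturmian word, then for every infinite
sequence of nonempty finite binary words some permuted concatenation of finitely many of
them fails to be a factor of `x`. -/
theorem sturmian_perm_concat_not_factor
    (r : ℕ) (hr : 1 ≤ r) (x : ℕ → Bool) (hx : IsSturmian x) (hpf : IsPowerFree r x)
    (V : ℕ → List Bool) (hV : ∀ i, V i ≠ []) :
    ∃ k : ℕ, 1 ≤ k ∧ ∃ n : Fin k → ℕ, StrictMono n ∧ ∃ σ : Equiv.Perm (Fin k),
      ¬ IsFactorOf (permConcat V n σ) x := by
  by_contra hcon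
  push Not at hcon
  have F := perm_of_list x V hcon
  have long : ∀ M N : ℕ, ∃ n, M ≤ n ∧ N ≤ (V n).length := by
    intro M N
    by_contra hno
    push Not at hno
    have hfin : Set.Finite {l : List Bool | l.length < N} := List.finite_length_lt Bool N
    have hinf : ∃ u, {n | M ≤ n ∧ V n = u}.Infinite := by
      by_contra hall
      push Not at hall
      have := hfin.biUnion (t := fun u => {n | M ≤ n ∧ V n = u})
        (fun u _ => Set.not_infinite.1 (by simpa using hall u))
      refine (Set.Ici_infinite M) (this.subset ?_)
      intro n hn
      simp only [Set.mem_iUnion]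
      exact ⟨V n, hno n hn, hn, rfl⟩
    obtain ⟨u, hu⟩ := hinf
    obtain ⟨t, ht, hcard⟩ := hu.exists_subset_card_eq r
    have hmap : t.toList.map V = List.replicate r u := by
      rw [List.eq_replicate_iff]
      refine ⟨by simp [hcard], ?_⟩
      intro b hb
      obtain ⟨i, hi, rfl⟩ := List.mem_map.1 hb
      exact (ht (by simpa using hi)).2
    obtain ⟨i, hi⟩ : t.Nonempty := Finset.card_pos.1 (by omega)
    have hVi : V i = u := (ht (by simpa using hi)).2
    refine hpf u ?_ ?_
    · have := F [i] (by simp) (by simp)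
      simpa [hVi] using this
    · rw [← hmap]
      apply F _ t.nodup_toList
      intro h
      simp at h
      subst h
      simp at hi
  obtain ⟨n, hn1, hn2⟩ := long 2 (r * (V 0 ++ V 1).length)
  obtain ⟨m, hm1, hm2⟩ := long (n + 1) (r * (V 0 ++ V 1 ++ V n).length)
  have h0 : r * (V 0).length ≤ (V n).length :=
    le_trans (Nat.mul_le_mul_left r (by simp)) hn2
  have h1 : r * (V 1).length ≤ (V n).length :=
    le_trans (Nat.mul_le_mul_left r (by simp)) hn2
  have c0 : V 0 ++ V n ≠ V n ++ V 0 := fun h => no_comm r hr x hpf _ _ (hV 0) h0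
    (by simpa using F [0, n] (by simp; omega) (by simp)) h
  have c1 : V 1 ++ V n ≠ V n ++ V 1 := fun h => no_comm r hr x hpf _ _ (hV 1) h1
    (by simpa using F [1, n] (by simp; omega) (by simp)) h
  have c2 : (V 0 ++ V 1) ++ V n ≠ V n ++ (V 0 ++ V 1) := fun h =>
    no_comm r hr x hpf _ _ (by simp [hV]) hn2
    (by simpa using F [0, 1, n] (by simp; omega) (by simp)) h
  refine three_words r hr x hx.2 hpf (V 0 ++ V 1 ++ V n) (V 0 ++ V n ++ V 1)
    (V n ++ (V 0 ++ V 1)) (V m) (by simp; omega) (by simp; omega) hm2 ?_ c2 ?_ ?_ ?_ ?_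
  · simpa using c1
  · intro h
    apply c0
    simpa [← List.append_assoc] using h
  · simpa using F [0, 1, n, m] (by simp; omega) (by simp)
  · simpa using F [0, n, 1, m] (by simp; omega) (by simp)
  · simpa using F [n, 0, 1, m] (by simp; omega) (by simp)
end

section
/- Let r ≥ 1 and let x be an r-power free Sturmian word over {0,1}. Define φ : {0,1}⁺ → {0,1} by φ(u) = 0 if u is a factor of x and φ(u) = 1 otherwise. Then no infinite word y in the subshift Ω(x) generated by x admits a φ-ultra monochromatic factorization. -/
theorem aux_infix {A : Type*} (x : ℕ → A) (a u b : List A) (hu : u ≠ [])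
    (h : IsFactorOf (a ++ u ++ b) x) : IsFactorOf u x := by
  obtain ⟨-, i, hi⟩ := h
  refine ⟨hu, i + a.length, ?_⟩
  apply List.ext_getElem
  · simp
  · intro t h1 h2
    have h3 : a.length + t < (a ++ u ++ b).length := by simp; omega
    have h4 : (a ++ u ++ b)[a.length + t]'h3 = u[t] := by
      rw [List.getElem_append_left (by simp; omega), List.getElem_append_right (by omega)]
      simp
    rw [← h4, List.getElem_of_eq hi h3]
    simp [add_assoc]

theorem aux_split : ∀ (a b : List Bool), a.length = b.length → a ≠ b →
    ∃ p α a' b', a = p ++ α :: a' ∧ b = p ++ (!α) :: b' := by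
  intro a
  induction a with
  | nil => intro b h1 h2; cases b <;> simp_all
  | cons s a ih =>
    intro b h1 h2
    cases b with
    | nil => simp at h1
    | cons t b =>
      by_cases hst : s = t
      · subst hst
        obtain ⟨p, α, a', b', e1, e2⟩ := ih b (by simpa using h1) (by simpa using h2)
        exact ⟨s :: p, α, a', b', by simp [e1], by simp [e2]⟩
      · exact ⟨[], s, a, b, rfl, by cases s <;> cases t <;> simp_all⟩

theorem aux_bal (x : ℕ → Bool) (hx : IsBalanced x) (w : List Bool) (γ : Bool)
    (h1 : IsFactorOf (γ :: w ++ [γ]) x) (h2 : IsFactorOf ((!γ) :: w ++ [!γ]) x) : False := by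
  have h := hx _ _ h1 h2 (by simp) γ
  cases γ <;> simp [List.count_cons] at h <;> rw [abs_le] at h <;> omega

theorem aux_comm (x : ℕ → Bool) (hx : IsBalanced x) (a b c d : List Bool)
    (hab : a.length = b.length) (hcd : c.length = d.length) (hne : a ≠ b)
    (hca : IsFactorOf (c ++ a) x) (hcb : IsFactorOf (c ++ b) x)
    (hda : IsFactorOf (d ++ a) x) (hdb : IsFactorOf (d ++ b) x) : c = d := by
  by_contra hne'
  obtain ⟨p, α, a', b', rfl, rfl⟩ := aux_split a b hab hne
  obtain ⟨q, γ, c', d', e1, e2⟩ := aux_split c.reverse d.reverse (by simpa using hcd)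
    (by simpa using hne')
  have e1' : c = c'.reverse ++ γ :: q.reverse := by
    rw [← List.reverse_reverse c, e1]; simp
  have e2' : d = d'.reverse ++ (!γ) :: q.reverse := by
    rw [← List.reverse_reverse d, e2]; simp
  subst e1' e2'
  by_cases h : γ = α
  · subst h
    apply aux_bal x hx (q.reverse ++ p) γ
    · exact aux_infix x c'.reverse _ a' (by simp) (by simpa using hca)
    · exact aux_infix x d'.reverse _ b' (by simp) (by simpa using hdb)
  · obtain rfl : α = !γ := by cases γ <;> cases α <;> simp_all
    apply aux_bal x hx (q.reverse ++ p) γ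
    · exact aux_infix x c'.reverse _ b' (by simp) (by simpa using hcb)
    · exact aux_infix x d'.reverse _ a' (by simp) (by simpa using hda)

theorem aux_ultra {A : Type*} (V : ℕ → List A) (P : List A → Prop)
    (h : ∀ k : ℕ, 1 ≤ k → ∀ n : Fin k → ℕ, StrictMono n →
      ∀ σ : Equiv.Perm (Fin k), P (permConcat V n σ))
    (l : List ℕ) (hl : l ≠ []) (hd : l.Nodup) : P (l.map V).flatten := by
  have hm : StrictMono (l.get ∘ Tuple.sort l.get) :=
    (Tuple.monotone_sort l.get).strictMono_of_injective
      ((List.nodup_iff_injective_get.1 hd).comp (Equiv.injective _))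
  have := h l.length (List.length_pos_iff.2 hl) _ hm (Tuple.sort l.get)⁻¹
  have e : permConcat V (l.get ∘ Tuple.sort l.get) (Tuple.sort l.get)⁻¹ = (l.map V).flatten := by
    unfold permConcat
    congr 1
    apply List.ext_getElem <;> simp
  rwa [e] at this

theorem aux_rep {A : Type*} (U Q : List A) (h : U ++ Q = Q ++ U) (r : ℕ) :
    (List.replicate r U).flatten ++ Q = Q ++ (List.replicate r U).flatten := by
  induction r with
  | zero => simp
  | succ r ih =>
    rw [List.replicate_succ, List.flatten_cons, List.append_assoc, ih, ← List.append_assoc, h,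
      List.append_assoc]

theorem aux_fl {A : Type*} (U : List A) (V : ℕ → List A) (l : List ℕ)
    (h : ∀ k ∈ l, U ++ V k = V k ++ U) :
    U ++ (l.map V).flatten = (l.map V).flatten ++ U := by
  induction l with
  | nil => simp
  | cons s l ih =>
    rw [List.map_cons, List.flatten_cons, ← List.append_assoc, h s (by simp), List.append_assoc,
      ih (fun k hk => h k (by simp [hk])), List.append_assoc]

theorem aux_len {A : Type*} (V : ℕ → List A) (hV : ∀ i, V i ≠ []) (l : List ℕ) :
    l.length ≤ (l.map V).flatten.length := by
  induction l with
  | nil => simp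
  | cons s l ih =>
    have := List.length_pos_iff.2 (hV s)
    rw [List.map_cons, List.flatten_cons, List.length_append, List.length_cons]
    omega

/-- If `x` is an `r`-power free Sturmian word and `φ` colors factors of `x`
by `0` and non-factors by `1`, then no word in the subshift `Ω(x)` generated by `x`
admits a `φ`-ultra monochromatic factorization. -/
theorem sturmian_no_ultra_monochromatic_in_subshift
    (r : ℕ) (hr : 1 ≤ r) (x : ℕ → Bool) (hx : IsSturmian x) (hpf : IsPowerFree r x)
    (φ : List Bool → Fin 2)
    (hφ0 : ∀ u : List Bool, IsFactorOf u x → φ u = 0)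
    (hφ1 : ∀ u : List Bool, u ≠ [] → ¬ IsFactorOf u x → φ u = 1)
    (y : ℕ → Bool) (hy : ∀ u : List Bool, IsFactorOf u y → IsFactorOf u x) :
    ¬ ∃ V : ℕ → List Bool, IsFactorization y V ∧ IsUltraMonochromatic φ V := by
  rintro ⟨V, ⟨hV, hpre⟩, c, hc⟩
  have hF0 : IsFactorOf (V 0) x := by
    apply hy
    refine ⟨hV 0, 0, ?_⟩
    have := hpre 1
    simpa [IsPrefixOf, wordTake] using this
  have hc0 : c = 0 := by
    have h := aux_ultra V (fun w => φ w = c) hc [0] (by simp) (by simp)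
    simp only [List.map_cons, List.map_nil, List.flatten_cons, List.flatten_nil,
      List.append_nil] at h
    rw [← h, hφ0 _ hF0]
  subst hc0
  have hF : ∀ l : List ℕ, l ≠ [] → l.Nodup → IsFactorOf (l.map V).flatten x := by
    intro l hl hd
    have h := aux_ultra V (fun w => φ w = 0) hc l hl hd
    by_contra hn
    have h0 : (l.map V).flatten ≠ [] := by
      have h1 := aux_len V hV l
      have h2 := List.length_pos_iff.2 hl
      exact List.length_pos_iff.1 (by omega)
    have := hφ1 _ h0 hn
    simp_all
  obtain ⟨N, hN⟩ : ∃ N, ∀ k l, N ≤ k → k < l → V k ++ V l = V l ++ V k := by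
    by_cases hcom : ∀ k l, 0 ≤ k → k < l → V k ++ V l = V l ++ V k
    · exact ⟨0, hcom⟩
    · push Not at hcom
      obtain ⟨i, j, -, hij, hne⟩ := hcom
      refine ⟨j + 1, fun k l hk hl => ?_⟩
      apply aux_comm x hx.2 (V i ++ V j) (V j ++ V i) (V k ++ V l) (V l ++ V k)
        (by simp [add_comm]) (by simp [add_comm]) hne
      · simpa using hF [k, l, i, j] (by simp) (by simp; omega)
      · simpa using hF [k, l, j, i] (by simp) (by simp; omega)
      · simpa using hF [l, k, i, j] (by simp) (by simp; omega)
      · simpa using hF [l, k, j, i] (by simp) (by simp; omega)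
  have hU : IsFactorOf (V N) x := by simpa using hF [N] (by simp) (by simp)
  have hpos := List.length_pos_iff.2 (hV N)
  have hrpos : 0 < r * (V N).length := Nat.mul_pos hr hpos
  have hlen : ((List.replicate r (V N)).flatten).length = r * (V N).length := by simp
  set l := List.range' (N + 1) (r * (V N).length) with hl
  have hll : l.length = r * (V N).length := by simp [hl]
  have hQ := hF l (List.length_pos_iff.1 (by omega)) (by simp [hl, List.nodup_range'])
  have hcomm := aux_rep _ _ (aux_fl (V N) V l (fun k hk => hN N k le_rfl (by
    simp only [hl, List.mem_range'_1] at hk; omega))) r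
  have hge := aux_len V hV l
  have hp : (List.replicate r (V N)).flatten <+: (l.map V).flatten :=
    List.prefix_of_prefix_length_le ⟨_, hcomm⟩ ⟨_, rfl⟩ (by omega)
  obtain ⟨t, ht⟩ := hp
  refine hpf _ hU (aux_infix x [] _ t (List.length_pos_iff.1 (by omega)) ?_)
  simpa [ht] using hQ
end

section
/- Let A be a finite nonempty alphabet, μ the Bernoulli measure on A^ℕ (the infinite product of the uniform probability measure on A), and φ : A⁺ → C any finite coloring. Then for μ-almost all x ∈ A^ℕ there exists y ∈ Ω(x) which admits a φ-ultra monochromatic factorization. -/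
theorem aux_fs_pos (a : Stream' ℕ) (m : ℕ) (h : m ∈ Hindman.FS a) :
    (∀ i, 0 < a.get i) → 0 < m := by
  induction h with
  | head' a => intro h; exact h 0
  | tail' a m _ ih => intro h; exact ih (fun i => h (i + 1))
  | cons' a m _ ih =>
    intro h
    have := h 0
    have h2 : 0 < a.head := this
    omega

theorem aux_hindman {C : Type*} [Fintype C] (f : ℕ → C) :
    ∃ (b : ℕ → ℕ) (c : C), (∀ i, 0 < b i) ∧
      ∀ s : Finset ℕ, s.Nonempty → f (∑ i ∈ s, b i) = c := by
  obtain ⟨t, ⟨c, rfl⟩, b, hb⟩ := Hindman.FS_partition_regular (Stream'.const 1)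
    (Set.range (fun c : C => {n : ℕ | 0 < n ∧ f n = c})) (Set.finite_range _) (by
      intro m hm
      refine Set.mem_sUnion.2 ⟨_, ⟨f m, rfl⟩, ?_, rfl⟩
      exact aux_fs_pos _ _ hm (fun i => by simp [Stream'.get_const]))
  refine ⟨fun i => b.get i, c, fun i => (hb (Hindman.FS.singleton b i)).1, fun s hs => ?_⟩
  exact (hb (Hindman.FS.finsetSum b s hs)).2

open MeasureTheory in
theorem aux_measure
    {A : Type} [Fintype A] [Nonempty A] [MeasurableSpace A] [DiscreteMeasurableSpace A]
    (μ : Measure (ℕ → A))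
    (hμ : ∀ (n : ℕ) (a : Fin n → A),
      μ {x : ℕ → A | ∀ i : Fin n, x i = a i} = (1 / (Fintype.card A : ENNReal)) ^ n)
    (a : A) (n : ℕ) :
    ∀ᵐ x ∂μ, ∃ i : ℕ, ∀ k < n, x (i + k) = a := by
  classical
  rw [ae_iff]
  set q := Fintype.card A with hq
  have hq0 : 0 < q := Fintype.card_pos
  have key : ∀ m : ℕ, μ {x : ℕ → A | ¬ ∃ i : ℕ, ∀ k < n, x (i + k) = a} ≤
      (((q ^ n - 1 : ℕ) : ENNReal) * (1 / (q : ENNReal)) ^ n) ^ m := by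
    intro m
    let W : Finset (Fin m → Fin n → A) :=
      Fintype.piFinset (fun _ => Finset.univ.erase (fun _ => a))
    have hW : W.card = (q ^ n - 1) ^ m := by
      simp [W, Fintype.card_piFinset, Finset.card_erase_of_mem, hq]
    have hsub : {x : ℕ → A | ¬ ∃ i : ℕ, ∀ k < n, x (i + k) = a} ⊆
        ⋃ v ∈ W, {x : ℕ → A | ∀ i : Fin (m * n), x i = v i.divNat i.modNat} := by
      intro x hx
      simp only [Set.mem_iUnion]
      refine ⟨fun j k => x (n * j + k), ?_, ?_⟩
      · simp only [W, Fintype.mem_piFinset, Finset.mem_erase, Finset.mem_univ, and_true]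
        intro j h
        exact hx ⟨n * j, fun k hk => congrFun h ⟨k, hk⟩⟩
      · intro i
        simp [Fin.divNat, Fin.modNat, Nat.div_add_mod]
    calc _ ≤ _ := measure_mono hsub
      _ ≤ ∑ v ∈ W, _ := measure_biUnion_finset_le _ _
      _ = _ := by
        rw [Finset.sum_congr rfl (fun v _ => hμ (m * n) (fun i => v i.divNat i.modNat))]
        rw [Finset.sum_const, hW, nsmul_eq_mul, mul_pow, ← pow_mul, mul_comm m n]
        push_cast
        rfl
  have hlt : ((q ^ n - 1 : ℕ) : ENNReal) * (1 / (q : ENNReal)) ^ n < 1 := by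
    have hp : 0 < q ^ n := pow_pos hq0 n
    rw [one_div, ← ENNReal.inv_pow, ← div_eq_mul_inv]
    apply ENNReal.div_lt_of_lt_mul
    rw [one_mul]
    exact_mod_cast Nat.sub_lt hp one_pos
  have := ge_of_tendsto' (ENNReal.tendsto_pow_atTop_nhds_zero_of_lt_one hlt) key
  exact le_antisymm this bot_le

theorem aux_flatten {A : Type*} (a : A) (l : List ℕ) :
    (l.map (fun n => List.replicate n a)).flatten = List.replicate l.sum a := by
  induction l with
  | nil => simp
  | cons h t ih => simp [ih]

open MeasureTheory in
/-- Let `A` be a finite nonempty alphabet and `μ` the Bernoulli measure on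
`A^ℕ` (the infinite product of the uniform probability measure on `A`, characterized here
by its values on cylinder sets). Then for `μ`-almost all `x`, some `y` in the subshift
`Ω(x)` generated by `x` admits a `φ`-ultra monochromatic factorization. -/
theorem almost_all_subshift_has_ultra_monochromatic
    {A : Type} [Fintype A] [Nonempty A] [MeasurableSpace A] [DiscreteMeasurableSpace A]
    {C : Type*} [Fintype C] [Nonempty C] (φ : List A → C)
    (μ : Measure (ℕ → A))
    (hμ : ∀ (n : ℕ) (a : Fin n → A),
      μ {x : ℕ → A | ∀ i : Fin n, x i = a i} = (1 / (Fintype.card A : ENNReal)) ^ n) :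
    ∀ᵐ x ∂μ, ∃ y : ℕ → A, (∀ u : List A, IsFactorOf u y → IsFactorOf u x) ∧
      ∃ V : ℕ → List A, IsFactorization y V ∧ IsUltraMonochromatic φ V := by
  obtain ⟨a⟩ := ‹Nonempty A›
  haveI : Nonempty A := ⟨a⟩
  obtain ⟨b, c, hb, hc⟩ := aux_hindman (fun n => φ (List.replicate n a))
  filter_upwards [ae_all_iff.2 (fun n => aux_measure μ hμ a n)] with x hx
  refine ⟨fun _ => a, ?_, fun i => List.replicate (b i) a, ⟨?_, ?_⟩, c, ?_⟩
  · rintro u ⟨hu, _, hi⟩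
    refine ⟨hu, ?_⟩
    obtain ⟨i, h⟩ := hx u.length
    refine ⟨i, ?_⟩
    conv_lhs => rw [hi]
    apply List.map_congr_left
    intro k hk
    exact (h k (List.mem_range.1 hk)).symm
  · intro i h
    have := hb i
    rw [List.replicate_eq_nil_iff] at h
    omega
  · intro n
    have : (List.range n).map (fun i => List.replicate (b i) a)
      = ((List.range n).map b).map (fun n => List.replicate n a) := by simp
    rw [this, aux_flatten]
    simp [IsPrefixOf, wordTake]
  · intro k hk n hn σ
    have h1 : permConcat (fun i => List.replicate (b i) a) n σ
        = List.replicate (∑ i ∈ Finset.univ.map ⟨n, hn.injective⟩, b i) a := by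
      have : (List.ofFn fun t => List.replicate (b (n (σ t))) a)
        = (List.ofFn fun t => b (n (σ t))).map (fun n => List.replicate n a) := by
        rw [List.map_ofFn]; rfl
      rw [permConcat, this, aux_flatten, List.sum_ofFn, Finset.sum_map]
      congr 1
      exact Equiv.sum_comp σ (fun t => b (n t))
    rw [h1]
    exact hc _ (by
      haveI : Nonempty (Fin k) := ⟨⟨0, hk⟩⟩
      exact Finset.univ_nonempty.map)
end

section
/- Let x be an infinite word over A that is not purely periodic, and define φ : A⁺ → {0,1} by φ(u) = 0 if u is a prefix of x and φ(u) = 1 otherwise. Then x does not admit a φ-sequentially monochromatic factorization. -/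
theorem isPrefixOf_get {A : Type*} {u : List A} {x : ℕ → A} (h : IsPrefixOf u x) {i : ℕ}
    (hi : i < u.length) : u[i]? = some (x i) := by
  unfold IsPrefixOf wordTake at h
  rw [h]
  simp [hi]

theorem blockConcat_succ_left {A : Type*} (V : ℕ → List A) (k : ℕ) :
    blockConcat V 0 (k + 1) = V 0 ++ blockConcat V 1 k := by
  unfold blockConcat
  rw [List.range_succ_eq_map]
  simp [Function.comp_def, Nat.add_comm]

theorem length_blockConcat {A : Type*} (V : ℕ → List A) (hV : ∀ i, V i ≠ []) (i k : ℕ) :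
    k < (blockConcat V i k).length := by
  induction k with
  | zero => simpa [blockConcat, List.length_pos_iff] using hV i
  | succ k ih =>
    have h : blockConcat V i (k + 1) = blockConcat V i k ++ V (i + (k + 1)) := by
      unfold blockConcat
      rw [List.range_succ (n := k + 1)]
      simp
    have := List.length_pos_iff.mpr (hV (i + (k + 1)))
    rw [h, List.length_append]
    omega

/-- If `x` is not purely periodic and `φ` colors prefixes of `x` by `0`
and all other nonempty words by `1`, then `x` admits no `φ`-sequentially monochromatic
factorization. -/
theorem not_periodic_no_seq_monochromatic
    {A : Type*} (x : ℕ → A)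
    (hx : ¬ ∃ p : ℕ, 0 < p ∧ ∀ k : ℕ, x (k + p) = x k)
    (φ : List A → Fin 2)
    (hφ0 : ∀ u : List A, u ≠ [] → IsPrefixOf u x → φ u = 0)
    (hφ1 : ∀ u : List A, u ≠ [] → ¬ IsPrefixOf u x → φ u = 1) :
    ¬ ∃ V : ℕ → List A, IsFactorization x V ∧ IsSeqMonochromatic φ V := by
  rintro ⟨V, ⟨hV, hF⟩, c, hc⟩
  have hne : ∀ i j, blockConcat V i j ≠ [] := fun i j h => by
    have := length_blockConcat V hV i j
    simp [h] at this
  have hc0 : c = 0 := by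
    rw [← hc 0 0]
    apply hφ0 _ (hne 0 0)
    simpa [blockConcat] using hF 1
  have hP : ∀ i j, IsPrefixOf (blockConcat V i j) x := fun i j => by
    by_contra h
    have h1 := hφ1 _ (hne i j) h
    rw [hc i j, hc0] at h1
    exact absurd h1 (by decide)
  refine hx ⟨(V 0).length, List.length_pos_iff.mpr (hV 0), fun k => ?_⟩
  have hl := length_blockConcat V hV 1 k
  have h1 := isPrefixOf_get (hP 1 k) hl
  have h2 := isPrefixOf_get (hP 0 (k + 1)) (i := k + (V 0).length) (by
    rw [blockConcat_succ_left, List.length_append]; omega)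
  rw [blockConcat_succ_left, List.getElem?_append_right (by omega), Nat.add_sub_cancel, h1] at h2
  exact (Option.some.inj h2).symm
end

section
/- Let 𝕋 ∈ {0,1}^ℕ be the Thue–Morse word, defined by 𝕋_n = (sum of the binary digits of n) mod 2. Then there is no factorization 𝕋 = V₀V₁V₂⋯ in which every block V_i is a prefix of 𝕋 and all blocks V_i end with the same letter. Equivalently, 𝕋 admits no φ'-monochromatic factorization, where φ' : {0,1}⁺ → {0,1,2} is defined by φ'(u) = 0 if u is a prefix of 𝕋 ending with 0, φ'(u) = 1 if u is a prefix of 𝕋 ending with 1, and φ'(u) = 2 otherwise. -/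
/-- The Thue–Morse word: `thueMorse n` is the sum mod 2 of the binary digits of `n`
(`false` codes the letter 0 and `true` the letter 1). -/
def thueMorse (n : ℕ) : Bool := (Nat.digits 2 n).sum % 2 == 1

theorem tm_even (n : ℕ) : thueMorse (2 * n) = thueMorse n := by
  rcases Nat.eq_zero_or_pos n with rfl | h
  · rfl
  · have : Nat.digits 2 (2 * n) = 0 :: Nat.digits 2 n := by
      rw [Nat.digits_def' (by norm_num) (by omega)]
      congr 1
      · omega
      · congr 1; omega
    simp [thueMorse, this]

theorem tm_odd (n : ℕ) : thueMorse (2 * n + 1) = !thueMorse n := by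
  have : Nat.digits 2 (2 * n + 1) = 1 :: Nat.digits 2 n := by
    rw [Nat.digits_def' (by norm_num) (by omega)]
    congr 1
    · omega
    · congr 1; omega
  simp only [thueMorse, this, List.sum_cons]
  rcases Nat.mod_two_eq_zero_or_one (Nat.digits 2 n).sum with h | h
  · have h2 : (1 + (Nat.digits 2 n).sum) % 2 = 1 := by omega
    simp [h, h2]
  · have h2 : (1 + (Nat.digits 2 n).sum) % 2 = 0 := by omega
    simp [h, h2]

theorem tm_zero : thueMorse 0 = false := by simp [thueMorse]

theorem tm_one : thueMorse 1 = true := by simp [thueMorse]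

theorem tm_two : thueMorse 2 = true := by
  have := tm_even 1
  rw [tm_one] at this
  exact this

theorem tm_no_cube (p : ℕ) (h0 : thueMorse p = true) (h1 : thueMorse (p + 1) = true)
    (h2 : thueMorse (p + 2) = true) : False := by
  rcases Nat.even_or_odd' p with ⟨q, rfl | rfl⟩
  · rw [tm_odd] at h1
    rw [tm_even] at h0
    simp [h0] at h1
  · have e1 : 2 * q + 1 + 1 = 2 * (q + 1) := by ring
    have e2 : 2 * q + 1 + 2 = 2 * (q + 1) + 1 := by ring
    rw [e1, tm_even] at h1
    rw [e2, tm_odd] at h2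
    simp [h1] at h2

/-- Infinite descent on the first nonzero cut point: all cuts are even, so halve them. -/
theorem tm_descent (N : ℕ) : ∀ (c : ℕ → ℕ) (a : Bool), c 1 = N → c 0 = 0 →
    (∀ i, c i < c (i + 1)) →
    (∀ i k, c i + k < c (i + 1) → thueMorse (c i + k) = thueMorse k) →
    (∀ i m, c (i + 1) = m + 1 → thueMorse m = a) → False := by
  induction N using Nat.strong_induction_on with
  | _ N ih =>
    intro c a hN h0 hlt hb hl
    have hfirst : ∀ i, thueMorse (c i) = false := fun i => by
      have := hb i 0 (by have := hlt i; omega)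
      rwa [tm_zero] at this
    have heven : ∀ i, c i = 2 * (c i / 2) := by
      cases a with
      | false =>
        intro i
        cases i with
        | zero => omega
        | succ j =>
          by_contra hne
          have e : c (j + 1) = 2 * (c (j + 1) / 2) + 1 := by omega
          have h1 := hl j _ e
          have h2 := hfirst (j + 1)
          rw [e, tm_odd] at h2
          rw [tm_even] at h1
          simp [h1] at h2
      | true =>
        have hp : ∀ j p, c (j + 1) = 2 * p + 1 → thueMorse p = true := fun j p e => by
          have := hl j _ e
          rwa [tm_even] at this
        have step : ∀ j p, c (j + 1) = 2 * p + 1 → c (j + 1 + 1) = 2 * (p + 1) + 1 := by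
          intro j p e
          have g := hlt (j + 1)
          by_contra hne
          rcases Nat.lt_or_ge (c (j + 1 + 1)) (2 * p + 3) with hs | hs
          · have h1 := hl (j + 1) (c (j + 1)) (by omega)
            rw [hfirst] at h1
            exact absurd h1 (by decide)
          · have h1 := hb (j + 1) 1 (by omega)
            have h2 := hb (j + 1) 2 (by omega)
            have e1 : c (j + 1) + 1 = 2 * (p + 1) := by omega
            have e2 : c (j + 1) + 2 = 2 * (p + 1) + 1 := by omega
            rw [e1, tm_even, tm_one] at h1
            rw [e2, tm_odd, tm_two, h1] at h2
            exact absurd h2 (by decide)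
        intro i
        cases i with
        | zero => omega
        | succ j =>
          by_contra hne
          have e : c (j + 1) = 2 * (c (j + 1) / 2) + 1 := by omega
          have e1 := step j _ e
          have e2 := step (j + 1) _ e1
          exact tm_no_cube _ (hp _ _ e) (hp _ _ e1) (hp _ _ e2)
    have hpos : 0 < c 1 := lt_of_le_of_lt (Nat.zero_le _) (hlt 0)
    refine ih (c 1 / 2) (by omega) (fun i => c i / 2) (!a) rfl (by simp [h0]) ?_ ?_ ?_
    · intro i
      have := hlt i
      have := heven i
      have := heven (i + 1)
      show c i / 2 < c (i + 1) / 2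
      omega
    · intro i k hk
      have a1 := heven i
      have a2 := heven (i + 1)
      have hk' : c i / 2 + k < c (i + 1) / 2 := hk
      have h := hb i (2 * k) (by omega)
      have e : c i + 2 * k = 2 * (c i / 2 + k) := by omega
      rw [e, tm_even, tm_even] at h
      exact h
    · intro i m hm
      have a2 := heven (i + 1)
      have hm' : c (i + 1) / 2 = m + 1 := hm
      have h := hl i (2 * m + 1) (by omega)
      rw [tm_odd] at h
      rw [← h, Bool.not_not]

theorem isPrefixOf_getElem? {u : List Bool} {x : ℕ → Bool} (h : IsPrefixOf u x) (k : ℕ)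
    (hk : k < u.length) : u[k]? = some (x k) := by
  unfold IsPrefixOf wordTake at h
  rw [h]
  simp [hk]

/-- The Thue–Morse word has no factorization in which every block is a
prefix of it and all blocks end with the same letter. -/
theorem thueMorse_no_prefixal_same_last_letter_factorization :
    ¬ ∃ V : ℕ → List Bool, IsFactorization thueMorse V ∧
      (∀ i, IsPrefixOf (V i) thueMorse) ∧
      ∃ a : Bool, ∀ i, (V i).getLast? = some a := by
  rintro ⟨V, ⟨hne, hf⟩, hp, a, ha⟩
  have hsucc : ∀ i, ((List.range (i + 1)).map V).flatten
      = ((List.range i).map V).flatten ++ V i := by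
    intro i
    simp [List.range_succ]
  have hlen : ∀ i, (((List.range (i + 1)).map V).flatten).length
      = (((List.range i).map V).flatten).length + (V i).length := by
    intro i
    rw [hsucc, List.length_append]
  have hpos : ∀ i, 0 < (V i).length := fun i => List.length_pos_iff.mpr (hne i)
  have hb : ∀ i k, k < (V i).length →
      thueMorse ((((List.range i).map V).flatten).length + k) = thueMorse k := by
    intro i k hk
    have h1 := isPrefixOf_getElem? (hf (i + 1))
      ((((List.range i).map V).flatten).length + k) (by rw [hlen]; omega)
    have h2 := isPrefixOf_getElem? (hp i) k hk
    rw [hsucc, List.getElem?_append_right (by omega), Nat.add_sub_cancel_left, h2] at h1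
    exact (Option.some.inj h1).symm
  refine tm_descent _ (fun i => (((List.range i).map V).flatten).length) a rfl rfl ?_ ?_ ?_
  · intro i
    have := hpos i
    have := hlen i
    omega
  · intro i k hk
    have := hlen i
    exact hb i k (by omega)
  · intro i m hm
    have g := hlen i
    have g' := hpos i
    have h := ha i
    rw [List.getLast?_eq_getElem?, isPrefixOf_getElem? (hp i) _ (by omega)] at h
    have h3 := hb i ((V i).length - 1) (by omega)
    have e : (((List.range i).map V).flatten).length + ((V i).length - 1) = m := by omega
    rw [e] at h3
    rw [h3]
    exact Option.some.inj h
end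

section
/- Let x ∈ {0,1}^ℕ be the infinite word x = 010110111011110⋯, the concatenation of the blocks 01ⁿ (a 0 followed by n 1's) for n = 1, 2, 3, …. Define φ : {0,1}⁺ → {0,1} by φ(u) = 0 if u is a factor of x and φ(u) = 1 otherwise. Then no suffix of x admits a φ-ultra monochromatic factorization. -/
open scoped Classical in
/-- The infinite word `x = 010110111011110⋯`, the concatenation of the blocks `01ⁿ` for
`n = 1, 2, 3, …` (`false` codes 0, `true` codes 1): position `m` carries the letter `0`
exactly when `m = k(k+3)/2` for some `k ≥ 0`. -/
noncomputable def wordX (m : ℕ) : Bool :=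
  if ∃ k : ℕ, 2 * m = k * (k + 3) then false else true

theorem wordX_false_iff (m : ℕ) : wordX m = false ↔ ∃ k : ℕ, 2 * m = k * (k + 3) := by
  unfold wordX
  split_ifs with h <;> simp [h]

/-- The zeros number `k` and `k+1` of the word cannot be shifted to the right. -/
theorem wordX_no_shift (k a b d : ℕ) (ha : 2 * a = k * (k + 3))
    (hb : 2 * b = (k + 1) * (k + 4)) (hd : 0 < d)
    (h1 : wordX (a + d) = false) (h2 : wordX (b + d) = false) : False := by
  obtain ⟨p, hp⟩ := (wordX_false_iff _).1 h1
  obtain ⟨q, hq⟩ := (wordX_false_iff _).1 h2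
  have hkp : k < p := by
    by_contra h
    have : p ≤ k := by omega
    have := Nat.mul_le_mul this (Nat.add_le_add_right this 3)
    omega
  have hpq : p < q := by
    by_contra h
    have : q ≤ p := by omega
    have := Nat.mul_le_mul this (Nat.add_le_add_right this 3)
    nlinarith
  have h3 : p + 1 ≤ q := hpq
  have := Nat.mul_le_mul h3 (Nat.add_le_add_right h3 3)
  nlinarith

theorem length_flatten_ge (L : List (List Bool)) (h : ∀ u ∈ L, u ≠ []) :
    L.length ≤ L.flatten.length := by
  induction L with
  | nil => simp
  | cons u L ih =>
    have h1 : 0 < u.length := List.length_pos_iff.2 (h u (by simp))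
    have h2 := ih (fun v hv => h v (by simp [hv]))
    simp only [List.length_cons, List.flatten_cons, List.length_append]
    omega

/-- For `x = 010110111011110⋯` and `φ` coloring factors of `x` by `0` and
non-factors by `1`, no suffix of `x` admits a `φ`-ultra monochromatic factorization. -/
theorem wordX_no_suffix_ultra_monochromatic
    (φ : List Bool → Fin 2)
    (hφ0 : ∀ u : List Bool, IsFactorOf u wordX → φ u = 0)
    (hφ1 : ∀ u : List Bool, u ≠ [] → ¬ IsFactorOf u wordX → φ u = 1) :
    ∀ n : ℕ, ¬ ∃ V : ℕ → List Bool,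
      IsFactorization (fun m => wordX (n + m)) V ∧ IsUltraMonochromatic φ V := by
  rintro n ⟨V, ⟨hne, hpre⟩, c, hc⟩
  have hc0 : c = 0 := by
    have h := hc 1 le_rfl (fun i => i.val) (fun i j h => h) (Equiv.refl _)
    rw [← h]
    have e : permConcat V (fun i : Fin 1 => i.val) (Equiv.refl _) = V 0 := by
      simp [permConcat]
    rw [e]
    have h1 := hpre 1
    simp only [List.range_one, List.map_cons, List.map_nil, List.flatten_cons,
      List.flatten_nil, List.append_nil] at h1
    exact hφ0 _ ⟨hne 0, n, h1⟩
  subst hc0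
  obtain ⟨a, ha⟩ : ∃ a, n * (n + 3) = 2 * a := by
    have : Even (n * (n + 3)) := by
      rcases Nat.even_or_odd n with h | h
      · exact h.mul_right _
      · exact (h.add_odd (by decide)).mul_left _
    obtain ⟨a, ha⟩ := this
    exact ⟨a, by omega⟩
  obtain ⟨b, hb⟩ : ∃ b, b = a + n + 2 := ⟨_, rfl⟩
  have hb2 : 2 * b = (n + 1) * (n + 4) := by subst hb; nlinarith
  have hna : n ≤ a := by nlinarith
  obtain ⟨N, hN⟩ : ∃ N, N = n + 1 := ⟨_, rfl⟩
  obtain ⟨M, hM⟩ : ∃ M, M = b + 1 := ⟨_, rfl⟩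
  let σ : Equiv.Perm (Fin (N + M)) := finAddFlip.trans (finCongr (Nat.add_comm M N))
  have hu := hc (N + M) (by omega) (fun i => i.val) (fun i j h => h) σ
  let A : List Bool := (List.ofFn fun t : Fin N => V (M + t)).flatten
  let W : List Bool := ((List.range M).map V).flatten
  have hAW : permConcat V (fun i : Fin (N + M) => i.val) σ = A ++ W := by
    unfold permConcat
    rw [List.ofFn_add, List.flatten_append]
    congr 1
    · have e : ∀ t : Fin N, ((σ (Fin.castAdd M t)).val) = M + t.val := by
        intro t
        simp only [σ, Equiv.trans_apply, finAddFlip_apply_castAdd]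
        rfl
      simp only [A]
      congr 2
      funext t
      exact congrArg V (e t)
    · simp only [W]
      congr 1
      apply List.ext_getElem <;> simp [σ]
  rw [hAW] at hu
  have hA : N ≤ A.length := by
    have := length_flatten_ge (List.ofFn fun t : Fin N => V (M + t)) (by
      intro u hu
      obtain ⟨t, rfl⟩ := (List.mem_ofFn' _ _).1 hu
      exact hne _)
    simpa only [List.length_ofFn, List.length_map, List.length_range] using this
  have hW : M ≤ W.length := by
    have := length_flatten_ge ((List.range M).map V) (by
      intro u hu
      obtain ⟨t, _, rfl⟩ := List.mem_map.1 hu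
      exact hne _)
    simpa only [List.length_ofFn, List.length_map, List.length_range] using this
  have hfac : IsFactorOf (A ++ W) wordX := by
    by_contra h
    have := hφ1 _ (by intro h0; rw [List.append_eq_nil_iff] at h0; rw [h0.1] at hA; simp at hA; omega) h
    rw [hu] at this
    exact absurd this (by decide)
  obtain ⟨_, i, hi⟩ := hfac
  have hWp : W = wordTake (fun m => wordX (n + m)) W.length := hpre M
  have key : ∀ t, t < M → wordX (n + t) = wordX (i + (A.length + t)) := by
    intro t ht
    have htW : t < W.length := by omega
    have e1 : W[t]? = some (wordX (n + t)) := by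
      rw [hWp]; simp [wordTake, htW]
    have e2 : (A ++ W)[A.length + t]? = some (wordX (i + (A.length + t))) := by
      rw [hi]; simp [htW]
    rw [List.getElem?_append_right (by omega), Nat.add_sub_cancel_left, e1] at e2
    exact Option.some.inj e2
  have k1 := key (a - n) (by omega)
  have k2 := key (b - n) (by omega)
  rw [show n + (a - n) = a by omega, (wordX_false_iff a).2 ⟨n, by omega⟩,
    show i + (A.length + (a - n)) = a + (i + A.length - n) by omega] at k1
  rw [show n + (b - n) = b by omega, (wordX_false_iff b).2 ⟨n + 1, by rw [hb2]⟩,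
    show i + (A.length + (b - n)) = b + (i + A.length - n) by omega] at k2
  exact wordX_no_shift n a b _ ha.symm hb2 (by omega) k1.symm k2.symm
end

section
/- Let x ∈ {0,1}^ℕ be the infinite word x = 010110111011110⋯, the concatenation of the blocks 01ⁿ (a 0 followed by n 1's) for n = 1, 2, 3, …. Then for every finite coloring φ : {0,1}⁺ → C there exists a suffix x' of x which admits a φ-conditionally monochromatic factorization. -/
/-- The factorization `V` of the infinite word `x` is `φ`-conditionally monochromatic:
every permuted concatenation of finitely many blocks either is not a factor of `x` or
has the color `c`. -/
def IsCondMonochromatic {A C : Type*} (x : ℕ → A) (φ : List A → C)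
    (V : ℕ → List A) : Prop :=
  ∃ c : C, ∀ k : ℕ, 1 ≤ k → ∀ n : Fin k → ℕ, StrictMono n → ∀ σ : Equiv.Perm (Fin k),
    ¬ IsFactorOf (permConcat V n σ) x ∨ φ (permConcat V n σ) = c

/-- The factor of `wordX` of length `L` at position `p`. -/
noncomputable def segX (p L : ℕ) : List Bool := (List.range L).map fun k => wordX (p + k)

theorem segX_length (p L : ℕ) : (segX p L).length = L := by simp [segX]

theorem segX_add (p L M : ℕ) : segX p (L + M) = segX p L ++ segX (p + L) M := by
  simp [segX, List.range_add, Function.comp_def, add_assoc]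

theorem segX_inj_letters {p q L : ℕ} (h : segX p L = segX q L) (t : ℕ) (ht : t < L) :
    wordX (p + t) = wordX (q + t) := by
  have := congrArg (fun l => l[t]?) h
  simpa [segX, ht] using this

theorem zero_lt {k m : ℕ} (h : k * (k + 3) < m * (m + 3)) : k < m := by
  by_contra hc
  have : m ≤ k := by omega
  have := Nat.mul_le_mul this (Nat.add_le_add_right this 3)
  omega

/-- A factor containing two zeros determines its position. -/
theorem pos_unique {p q L k z : ℕ} (h : segX p L = segX q L) (hz : 2 * z = k * (k + 3))
    (hp : p ≤ z) (hL : z + k + 2 < p + L) : p = q := by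
  have hl := segX_inj_letters h
  have h1 : wordX z = false := (wordX_false_iff z).2 ⟨k, hz⟩
  have h2 : wordX (z + k + 2) = false := (wordX_false_iff _).2 ⟨k + 1, by nlinarith⟩
  have e1 := hl (z - p) (by omega)
  have e2 := hl (z - p + k + 2) (by omega)
  rw [show p + (z - p) = z by omega, h1] at e1
  rw [show p + (z - p + k + 2) = z + k + 2 by omega, h2] at e2
  obtain ⟨m, hm⟩ := (wordX_false_iff _).1 e1.symm
  obtain ⟨m', hm'⟩ := (wordX_false_iff _).1 e2.symm
  have hlt : m < m' := zero_lt (by omega)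
  have hge : (m + 1) * (m + 1 + 3) ≤ m' * (m' + 3) :=
    Nat.mul_le_mul hlt (Nat.add_le_add_right hlt 3)
  have hexp : (m + 1) * (m + 1 + 3) = m * (m + 3) + 2 * (m + 2) := by ring
  have hmk : m ≤ k := by omega
  rcases Nat.lt_or_ge m k with hlt2 | hge2
  · exfalso
    have e3 := hl (z - p + m + 2) (by omega)
    have h3 : wordX (q + (z - p + m + 2)) = false := (wordX_false_iff _).2 ⟨m + 1, by omega⟩
    rw [h3] at e3
    obtain ⟨r, hr⟩ := (wordX_false_iff _).1 e3
    have hr1 : k < r := zero_lt (by omega)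
    have hr2 : r < k + 1 := zero_lt (by
      have : (k + 1) * (k + 1 + 3) = k * (k + 3) + 2 * (k + 2) := by ring
      omega)
    omega
  · have hk : m = k := le_antisymm hmk hge2
    subst hk
    omega

/-- Infinite Ramsey theorem for pairs, with a growth condition. -/
theorem ramsey_growth {C : Type*} [Finite C] (f : ℕ → ℕ → C) (g : ℕ → ℕ) :
    ∃ c : C, ∃ a : ℕ → ℕ, ∀ m n, m < n → g (a m) < a n ∧ f (a m) (a n) = c := by
  let U : Ultrafilter ℕ := Filter.hyperfilter ℕ
  have key : ∀ h : ℕ → C, ∃ c, ∀ᶠ j in (U : Filter ℕ), h j = c := by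
    intro h
    have := (Ultrafilter.eventually_exists_iff (f := U) (P := fun c j => h j = c)).1
      (Filter.Eventually.of_forall fun j => ⟨h j, rfl⟩)
    exact this
  choose d hd using fun i => key (f i)
  obtain ⟨c, hc⟩ := key d
  obtain ⟨a, -, ha⟩ := exists_seq_of_forall_finset_exists (fun i => d i = c)
    (fun i j => g i < j ∧ f i j = c) (by
      intro s hs
      have : ∀ᶠ j in (U : Filter ℕ), ∀ i ∈ s, g i < j ∧ f i j = c := by
        rw [Filter.eventually_all_finset]
        intro i hi
        have h1 := hd i
        rw [hs i hi] at h1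
        have h2 : ∀ᶠ j in (U : Filter ℕ), g i < j :=
          Nat.hyperfilter_le_atTop (Filter.eventually_gt_atTop (g i))
        exact h2.and h1
      exact (hc.and this).exists)
  exact ⟨c, a, ha⟩

theorem concat_pos {a : ℕ → ℕ} (ha : ∀ m n, m < n → (a m + 1) * (a m + 4) < a n)
    (l : List ℕ) : l ≠ [] → ∀ p L,
      (l.map fun i => segX (a i) (a (i + 1) - a i)).flatten = segX p L →
      ∃ m n, m < n ∧ p = a m ∧ p + L = a n := by
  have hlt : ∀ m n, m < n → a m < a n := fun m n h => by
    have := ha m n h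
    nlinarith
  have hinj : Function.Injective a := (strictMono_nat_of_lt_succ
    fun n => hlt n (n + 1) (by omega)).injective
  induction l with
  | nil => simp
  | cons i l ih =>
    intro _ p L h
    have hi := hlt i (i + 1) (by omega)
    have hLen := congrArg List.length h
    rw [List.map_cons, List.flatten_cons, List.length_append, segX_length, segX_length] at hLen
    obtain ⟨M, rfl⟩ : ∃ M, L = (a (i + 1) - a i) + M := ⟨_, hLen.symm⟩
    rw [List.map_cons, List.flatten_cons, segX_add] at h
    obtain ⟨h1, h2⟩ := List.append_inj h (by simp [segX_length])
    have hg := ha i (i + 1) (by omega)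
    have hpe : a i = p := by
      obtain ⟨z, hz⟩ : ∃ z, a i * (a i + 3) = z + z := by
        have : Even (a i * (a i + 3)) := by
          rcases Nat.even_or_odd (a i) with he | ho
          · exact he.mul_right _
          · exact (ho.add_odd (by decide)).mul_left _
        exact this
      refine pos_unique (k := a i) (z := z) h1 (by omega) ?_ ?_
      · rcases Nat.eq_zero_or_pos (a i) with h0 | h0
        · omega
        · nlinarith
      · rw [Nat.add_sub_cancel' hi.le]
        nlinarith
    subst hpe
    rw [show a i + (a (i + 1) - a i) = a (i + 1) by omega] at h2
    by_cases hnil : l = []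
    · subst hnil
      have : M = 0 := by
        have := congrArg List.length h2
        simpa [segX_length] using this.symm
      exact ⟨i, i + 1, by omega, rfl, by omega⟩
    · obtain ⟨m, n, hmn, e1, e2⟩ := ih hnil _ _ h2
      have := hinj e1
      exact ⟨i, n, by omega, rfl, by omega⟩

/-- For `x = 010110111011110⋯` and every finite coloring `φ`, some suffix
of `x` admits a `φ`-conditionally monochromatic factorization. -/
theorem wordX_suffix_admits_conditionally_monochromatic
    {C : Type*} [Fintype C] [Nonempty C] (φ : List Bool → C) :
    ∃ n : ℕ, ∃ V : ℕ → List Bool,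
      IsFactorization (fun m => wordX (n + m)) V ∧
      IsCondMonochromatic (fun m => wordX (n + m)) φ V := by
  obtain ⟨c, a, ha⟩ := ramsey_growth (fun i j => φ (segX i (j - i)))
    (fun i => (i + 1) * (i + 4))
  have hg : ∀ m n, m < n → (a m + 1) * (a m + 4) < a n := fun m n h => (ha m n h).1
  have hlt : ∀ m n, m < n → a m < a n := fun m n h => by
    have := hg m n h
    nlinarith
  have hmono : StrictMono a := strictMono_nat_of_lt_succ fun n => hlt n (n + 1) (by omega)
  refine ⟨a 0, fun i => segX (a i) (a (i + 1) - a i), ⟨?_, ?_⟩, c, ?_⟩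
  · intro i h
    have := congrArg List.length h
    have h2 := hlt i (i + 1) (by omega)
    simp only [segX_length, List.length_nil] at this
    omega
  · intro n
    have key : ((List.range n).map fun i => segX (a i) (a (i + 1) - a i)).flatten
        = segX (a 0) (a n - a 0) := by
      induction n with
      | zero => simp [segX]
      | succ n ih =>
        have h0 : a 0 ≤ a n := hmono.monotone (Nat.zero_le n)
        have h1 := hlt n (n + 1) (by omega)
        rw [List.range_succ, List.map_append, List.flatten_append, ih,
          show a (n + 1) - a 0 = (a n - a 0) + (a (n + 1) - a n) by omega, segX_add,
          Nat.add_sub_cancel' h0]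
        simp
    unfold IsPrefixOf
    rw [key, segX_length]
    rfl
  · intro k hk n _ σ
    by_cases hf : IsFactorOf (permConcat (fun i => segX (a i) (a (i + 1) - a i)) n σ)
        (fun m => wordX (a 0 + m))
    · right
      obtain ⟨-, i, hi⟩ := hf
      have hi' : permConcat (fun i => segX (a i) (a (i + 1) - a i)) n σ = segX (a 0 + i)
          (permConcat (fun i => segX (a i) (a (i + 1) - a i)) n σ).length := by
        conv_lhs => rw [hi]
        simp [segX, add_assoc]
      have hl : permConcat (fun i => segX (a i) (a (i + 1) - a i)) n σ =
          ((List.ofFn fun t => n (σ t)).map fun i => segX (a i) (a (i + 1) - a i)).flatten := by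
        simp [permConcat, List.map_ofFn, Function.comp_def]
      obtain ⟨m, m', hmm, e1, e2⟩ := concat_pos hg (List.ofFn fun t => n (σ t))
        (by
          intro h
          have := congrArg List.length h
          simp at this
          omega) _ _ (hl.symm.trans hi')
      have h3 := (ha m m' hmm).2
      have h4 := hlt m m' hmm
      rw [hi', e1]
      rw [e1] at e2
      rw [← h3]
      congr 2
      omega
    · exact Or.inl hf
end
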